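/- Let f be the local rule of width 3 given by f(x_1,x_2,x_3) = x_2 + min{x_1, 1−x_2} − min{x_2, 1−x_3} (rule 184), and define g : ℤ^2 → ℤ by g(s_1,s_2) = s_1 + min{s_2 − s_1 − 1, 1}. Then for every strictly increasing s : ℤ → ℤ, the function t : ℤ → ℤ with t_i = g(s_i, s_{i+1}) is strictly increasing, and for all i ∈ ℤ, φ(t)_i = f(φ(s)_{i−1}, φ(s)_i, φ(s)_{i+1}). -/

import Mathlib

/-- For a (strictly increasing) `s : ℤ → ℤ`, `phi s` is the occupancy bisequence:
`phi s i = 1` iff `i` lies in the range of `s`. -/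
noncomputable def phi (s : ℤ → ℤ) (i : ℤ) : Fin 2 :=
  haveI := Classical.propDecidable (i ∈ Set.range s)
  if i ∈ Set.range s then 1 else 0

/-- The particle mapping for rule 184: `g(s₁,s₂) = s₁ + min{s₂ - s₁ - 1, 1}`. -/
def g184 (s1 s2 : ℤ) : ℤ := s1 + min (s2 - s1 - 1) 1

/-!
Rule 184 is the traffic rule: simultaneously, every particle with a vacant site on its right moves
one step to the right. When `a < b` are the positions of consecutive particles, `g184 a b` lies in
`[a, b)` and equals `a` if the next site is occupied and `a + 1` otherwise. The first fact keeps the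
particles in order; the second says that a site is occupied after one step iff it held a blocked
particle, or it was vacant with a particle on its left.
-/

/-- The local rule of width 3 of elementary cellular automaton 184, with values in `ℤ` so that
the subtraction does not truncate; its arguments are meant to be occupation numbers `0` or `1`. -/
def rule184 (x₁ x₂ x₃ : ℤ) : ℤ := x₂ + min x₁ (1 - x₂) - min x₂ (1 - x₃)

/-- The set of sites occupied after one step of rule 184 from the set `A` of occupied sites. -/
def occupiedStep184 (A : Set ℤ) : Set ℤ := {n | n ∈ A ∧ n + 1 ∈ A ∨ n ∉ A ∧ n - 1 ∈ A}

/-- The particle positions after one step of rule 184 from the positions `s`. The particles are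
labelled by a successor order `ι`, so that a configuration may also be infinite to the right only,
as for `ι = ℕ`. -/
def particleStep184 {ι : Type*} [Preorder ι] [SuccOrder ι] (s : ι → ℤ) (k : ι) : ℤ :=
  g184 (s k) (s (Order.succ k))

theorem coe_phi (s : ℤ → ℤ) (n : ℤ) :
    ((phi s n : ℕ) : ℤ) = (Set.range s).indicator 1 n := by
  by_cases hn : n ∈ Set.range s
  · rw [phi, if_pos hn, Set.indicator_of_mem hn]
    rfl
  · rw [phi, if_neg hn, Set.indicator_of_notMem hn]
    rfl

theorem rule184_indicator (A : Set ℤ) (n : ℤ) :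
    rule184 (A.indicator 1 (n - 1)) (A.indicator 1 n) (A.indicator 1 (n + 1)) =
      (occupiedStep184 A).indicator 1 n := by
  by_cases hleft : n - 1 ∈ A <;> by_cases hmid : n ∈ A <;> by_cases hright : n + 1 ∈ A <;>
    simp [rule184, occupiedStep184, hleft, hmid, hright]

theorem g184_lt (a b : ℤ) : g184 a b < b := by
  unfold g184
  lia

theorem le_g184 {a b : ℤ} (hab : a < b) : a ≤ g184 a b := by
  unfold g184
  lia

theorem g184_add_one (a : ℤ) : g184 a (a + 1) = a := by
  simp [g184]

theorem g184_of_add_one_lt {a b : ℤ} (hab : a + 1 < b) : g184 a b = a + 1 := by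
  unfold g184
  lia

theorem strictMono_particleStep184 {ι : Type*} [PartialOrder ι] [SuccOrder ι] [NoMaxOrder ι]
    {s : ι → ℤ} (hs : StrictMono s) : StrictMono (particleStep184 s) := by
  intro j k hjk
  calc particleStep184 s j < s (Order.succ j) := g184_lt _ _
    _ ≤ s k := hs.monotone (Order.succ_le_of_lt hjk)
    _ ≤ particleStep184 s k := le_g184 (hs (Order.lt_succ k))

theorem particleStep184_of_add_one_notMem {ι : Type*} [Preorder ι] [SuccOrder ι] [NoMaxOrder ι]
    {s : ι → ℤ} (hs : StrictMono s) {k : ι} (hk : s k + 1 ∉ Set.range s) :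
    particleStep184 s k = s k + 1 := by
  have hle : s k + 1 ≤ s (Order.succ k) := hs (Order.lt_succ k)
  have hne : s k + 1 ≠ s (Order.succ k) := fun h => hk ⟨Order.succ k, h.symm⟩
  exact g184_of_add_one_lt (hle.lt_of_ne hne)

section Range

variable {ι : Type*} [LinearOrder ι] [SuccOrder ι] {s : ι → ℤ}

theorem apply_succ_eq_add_one_of_mem_range (hs : StrictMono s) {k : ι}
    (hk : s k + 1 ∈ Set.range s) : s (Order.succ k) = s k + 1 := by
  obtain ⟨l, hl⟩ := hk
  have hcov : s k ⋖ s l := hl ▸ Order.covBy_add_one (s k)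
  have hkl : k ⋖ l := hcov.of_image (OrderEmbedding.ofStrictMono s hs)
  rw [hkl.succ_eq, hl]

theorem particleStep184_of_add_one_mem (hs : StrictMono s) {k : ι}
    (hk : s k + 1 ∈ Set.range s) : particleStep184 s k = s k := by
  rw [particleStep184, apply_succ_eq_add_one_of_mem_range hs hk, g184_add_one]

theorem range_particleStep184 [NoMaxOrder ι] (hs : StrictMono s) :
    Set.range (particleStep184 s) = occupiedStep184 (Set.range s) := by
  apply Set.Subset.antisymm
  · rintro _ ⟨k, rfl⟩
    by_cases hk : s k + 1 ∈ Set.range s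
    · rw [particleStep184_of_add_one_mem hs hk]
      exact .inl ⟨⟨k, rfl⟩, hk⟩
    · rw [particleStep184_of_add_one_notMem hs hk]
      exact .inr ⟨hk, k, (add_sub_cancel_right _ _).symm⟩
  · rintro n (⟨⟨k, rfl⟩, hright⟩ | ⟨hvacant, k, hk⟩)
    · exact ⟨k, particleStep184_of_add_one_mem hs hright⟩
    · obtain rfl : n = s k + 1 := eq_add_of_sub_eq hk.symm
      exact ⟨k, particleStep184_of_add_one_notMem hs hvacant⟩

end Range

theorem stmt_12_general {ι : Type*} [LinearOrder ι] [SuccOrder ι] [NoMaxOrder ι] {s : ι → ℤ}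
    (hs : StrictMono s) :
    StrictMono (particleStep184 s) ∧
      ∀ n : ℤ, (Set.range (particleStep184 s)).indicator 1 n =
        rule184 ((Set.range s).indicator 1 (n - 1)) ((Set.range s).indicator 1 n)
          ((Set.range s).indicator 1 (n + 1)) :=
  ⟨strictMono_particleStep184 hs, fun n => by rw [range_particleStep184 hs, rule184_indicator]⟩

/-- For rule 184, `f(x₁,x₂,x₃) = x₂ + min{x₁,1-x₂} - min{x₂,1-x₃}` (arithmetic
in `ℤ`), and `g(s₁,s₂) = s₁ + min{s₂-s₁-1,1}`: for every strictly increasing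
`s : ℤ → ℤ`, the bisequence `t i = g (s i) (s (i+1))` is strictly increasing and
`φ(t)ᵢ = f(φ(s)_{i-1}, φ(s)ᵢ, φ(s)_{i+1})` for all `i`. -/
theorem stmt_12 (s : ℤ → ℤ) (hs : StrictMono s) :
    StrictMono (fun i : ℤ => g184 (s i) (s (i + 1))) ∧
    ∀ i : ℤ,
      (((phi (fun i : ℤ => g184 (s i) (s (i + 1))) i) : ℕ) : ℤ) =
        ((phi s i : ℕ) : ℤ)
          + min ((phi s (i - 1) : ℕ) : ℤ) (1 - ((phi s i : ℕ) : ℤ))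
          - min ((phi s i : ℕ) : ℤ) (1 - ((phi s (i + 1) : ℕ) : ℤ)) := by
  simp only [coe_phi]
  exact stmt_12_general hs
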